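/- arXiv:1811.04721 — 5 statements merged into one kernel-verified Lean document; each statement's English description precedes it below -/
import Mathlib

section
/- Let m ≥ 2 and α_2, …, α_m ∈ ℝ, and let E := {(x_1,…,x_m) ∈ ℝ^m : x_i − x_1 ≥ α_i for all i ∈ {2,…,m}}. Let z = (z_1,…,z_m) ∈ ℝ^m, set δ_1 := z_1, and let δ_2 ≤ δ_3 ≤ ⋯ ≤ δ_m be the values {z_i − α_i}_{i∈{2,…,m}} arranged in nondecreasing order. Let k be the largest number in {1,…,m} such that δ_k ≤ (δ_1 + ⋯ + δ_k)/k. Then the metric projection x = (x_1,…,x_m) of z onto E is given by x_1 = (δ_1 + ⋯ + δ_k)/k and, for every i ∈ {2,…,m}, x_i = max{x_1, z_i − α_i} + α_i. -/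
/-!
Let `c = x 0` be the mean of the first `k` of the `δ`'s.
By the definition of `k` and monotonicity, `δ i ≤ c` for `1 ≤ i < k`, while maximality of `k`
gives `c < δ i` for `i ≥ k`. Hence, after reordering by `σ`, the residual `z - x` equals `δ i - c`
on the first `k` indices and `0` on the others, so its coordinates sum to zero. For `y ∈ E`,
each coordinate satisfies `(z i - x i) * (y i - x i) ≤ (z i - x i) * (y 0 - x 0)`: where the
residual is nonzero and `i ≠ 0` it is negative, `x i = c + α i` and `y i ≥ y 0 + α i`. Summing gives the
variational inequality `⟪z - x, y - x⟫ ≤ 0`, which says that `x` is nearest to `z` in `E`.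
-/

/-- A sum over the indices below `k + 1` splits off the term of index `k`. -/
lemma sum_filter_lt_succ {m : ℕ} (δ : Fin m → ℝ) (k : ℕ) (hk : k < m) :
    ∑ i ∈ Finset.univ.filter (fun i : Fin m => (i : ℕ) < k + 1), δ i =
      δ ⟨k, hk⟩ + ∑ i ∈ Finset.univ.filter (fun i : Fin m => (i : ℕ) < k), δ i := by
  have h : Finset.univ.filter (fun i : Fin m => (i : ℕ) < k + 1) =
      insert ⟨k, hk⟩ (Finset.univ.filter (fun i : Fin m => (i : ℕ) < k)) := by
    ext i
    simp only [Finset.mem_filter, Finset.mem_univ, true_and, Finset.mem_insert, Fin.ext_iff]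
    omega
  rw [h, Finset.sum_insert (by simp)]


theorem stmt1 (m : ℕ) (hm : 2 ≤ m) (α : Fin m → ℝ)
    (E : Set (EuclideanSpace ℝ (Fin m)))
    (hE : E = {x : EuclideanSpace ℝ (Fin m) |
      ∀ i : Fin m, i ≠ ⟨0, by omega⟩ → x i - x ⟨0, by omega⟩ ≥ α i})
    (z : EuclideanSpace ℝ (Fin m))
    -- δ : the vector with δ_1 = z_1 and (δ_2, …, δ_m) the values (z_i - α_i)_{i≥2}
    -- sorted in nondecreasing order (via a permutation σ fixing the first index)
    (δ : Fin m → ℝ) (hδ0 : δ ⟨0, by omega⟩ = z ⟨0, by omega⟩)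
    (σ : Equiv.Perm (Fin m)) (hσ0 : σ ⟨0, by omega⟩ = ⟨0, by omega⟩)
    (hδσ : ∀ i : Fin m, i ≠ ⟨0, by omega⟩ → δ i = z (σ i) - α (σ i))
    (hδmono : ∀ i j : Fin m, i ≠ ⟨0, by omega⟩ → i ≤ j → δ i ≤ δ j)
    -- k : the largest number in {1, …, m} with δ_k ≤ (δ_1 + ⋯ + δ_k)/k
    (k : ℕ) (hk1 : 1 ≤ k) (hkm : k ≤ m)
    (hkle : δ ⟨k - 1, by omega⟩ ≤
      (∑ i ∈ Finset.univ.filter (fun i : Fin m => (i : ℕ) < k), δ i) / k)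
    (hkmax : ∀ j : ℕ, k < j → ∀ hjm : j ≤ m,
      ¬ (δ ⟨j - 1, by omega⟩ ≤
        (∑ i ∈ Finset.univ.filter (fun i : Fin m => (i : ℕ) < j), δ i) / j))
    -- x : the candidate projection
    (x : EuclideanSpace ℝ (Fin m))
    (hx0 : x ⟨0, by omega⟩ =
      (∑ i ∈ Finset.univ.filter (fun i : Fin m => (i : ℕ) < k), δ i) / k)
    (hxi : ∀ i : Fin m, i ≠ ⟨0, by omega⟩ →
      x i = max (x ⟨0, by omega⟩) (z i - α i) + α i) :
    x ∈ E ∧ ∀ y ∈ E, ‖z - x‖ ≤ ‖z - y‖ := by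
  subst hE
  set o : Fin m := ⟨0, by omega⟩ with ho
  set c := x o with hc
  set S := ∑ i ∈ Finset.univ.filter (fun i : Fin m => (i : ℕ) < k), δ i with hS
  have hkpos : (0 : ℝ) < k := by exact_mod_cast hk1
  have hSc : S = k * c := by rw [hx0]; field_simp
  have hlow : ∀ i : Fin m, i ≠ o → (i : ℕ) < k → δ i ≤ c := by
    intro i hi hik
    rw [hx0]
    exact (hδmono i ⟨k - 1, by omega⟩ hi (by rw [Fin.le_def]; simp only; omega)).trans hkle
  have hhigh : ∀ i : Fin m, k ≤ (i : ℕ) → c < δ i := by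
    intro i hik
    have hkm' : k < m := lt_of_le_of_lt hik i.2
    have h1 := hkmax (k + 1) (by omega) (by omega)
    rw [sum_filter_lt_succ δ k hkm', ← hS, hSc] at h1
    simp only [Nat.add_sub_cancel, not_le] at h1
    rw [div_lt_iff₀ (by positivity)] at h1
    push_cast at h1
    have h2 : c < δ ⟨k, hkm'⟩ := by
      by_contra! h
      nlinarith [mul_le_mul_of_nonneg_left h hkpos.le]
    refine h2.trans_le (hδmono _ i ?_ (by rw [Fin.le_def]; exact hik))
    rw [ho, Ne, Fin.ext_iff]
    simp only
    omega
  -- The residual, listed in sorted order.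
  have hres : ∀ i : Fin m,
      z (σ i) - x (σ i) = if (i : ℕ) < k then δ i - c else 0 := by
    intro i
    by_cases hi : i = o
    · subst hi
      rw [if_pos (show ((o : Fin m) : ℕ) < k from hk1), hσ0, hδ0]
    · have hσi : σ i ≠ o := fun h => hi (σ.injective (h.trans hσ0.symm))
      rw [hxi _ hσi, ← hδσ i hi]
      split_ifs with hik
      · rw [max_eq_left (hlow i hi hik), hδσ i hi]; ring
      · rw [max_eq_right (hhigh i (by omega)).le, hδσ i hi]; ring
  have hsum : ∑ i, (z i - x i) = 0 := by
    rw [← Equiv.sum_comp σ, Finset.sum_congr rfl fun i _ => hres i, ← Finset.sum_filter,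
      Finset.sum_sub_distrib, ← hS, hSc, Finset.sum_const, Fin.card_filter_val_lt,
      min_eq_right hkm, nsmul_eq_mul, sub_self]
  refine ⟨fun i hi => ?_, fun y hy => ?_⟩
  · rw [hxi i hi]
    linarith [le_max_left c (z i - α i)]
  · have hterm : ∀ i, (z i - x i) * (y i - x i) ≤ (z i - x i) * (y o - c) := by
      intro i
      by_cases hi : i = o
      · rw [hi]
      · have hyi : y i - y o ≥ α i := hy i hi
        have hxi' := hxi i hi
        rcases le_total c (z i - α i) with h | h
        · rw [max_eq_right h] at hxi'
          have h0 : z i - x i = 0 := by linarith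
          simp [h0]
        · rw [max_eq_left h] at hxi'
          exact mul_le_mul_of_nonpos_left (by linarith) (by linarith)
    rw [EuclideanSpace.norm_eq, EuclideanSpace.norm_eq]
    apply Real.sqrt_le_sqrt
    simp only [PiLp.sub_apply, Real.norm_eq_abs, sq_abs]
    calc ∑ i, (z i - x i) ^ 2
        ≤ ∑ i, ((z i - y i) ^ 2 + (z i - x i) * (2 * (y o - c))) :=
          Finset.sum_le_sum fun i _ => by nlinarith [hterm i, sq_nonneg (y i - x i)]
      _ = ∑ i, (z i - y i) ^ 2 := by
          rw [Finset.sum_add_distrib, ← Finset.sum_mul, hsum, zero_mul, add_zero]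
end

section
/- Let m ≥ 2, let δ = (δ_1,…,δ_m) ∈ ℝ^m, let K := {(y_1,…,y_m) ∈ ℝ^m : y_1 ≤ y_i for all i ∈ {2,…,m}}, and let y = (y_1,…,y_m) be the metric projection of δ onto K. Then: (a) y_1 ≤ δ_1; (b) y_i = max{y_1, δ_i} for every i ∈ {2,…,m}; and (c) y_1 + y_2 + ⋯ + y_m = δ_1 + δ_2 + ⋯ + δ_m. -/
/-!
The minimizer `y` of the distance to `δ` satisfies the first-order condition `0 ≤ ⟪y - δ, d⟫` for
every direction `d` along which a short segment from `y` stays in `K`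
(`inner_nonneg_of_norm_min`). Every claim follows by testing suitable directions:
`-e₀` is always feasible and gives `y₀ ≤ δ₀`; `eᵢ` with `i ≠ 0` is always feasible and gives
`δᵢ ≤ yᵢ`; when `y₀ < yᵢ` the direction `-(yᵢ - y₀) eᵢ` is feasible and gives `yᵢ ≤ δᵢ`; and
both `(1, …, 1)` and `(-1, …, -1)` are feasible, which gives equality of the sums.
-/

/-- First-order optimality condition for a nearest point, along a feasible direction `d`. -/
lemma inner_nonneg_of_norm_min {E : Type*} [NormedAddCommGroup E] [InnerProductSpace ℝ E]
    {K : Set E} {y δ : E} (hmin : ∀ p ∈ K, ‖y - δ‖ ≤ ‖p - δ‖) (d : E)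
    (hd : ∀ t : ℝ, 0 < t → t ≤ 1 → y + t • d ∈ K) : 0 ≤ inner ℝ (y - δ) d := by
  by_contra! ha
  set a := inner ℝ (y - δ) d with ha_def
  have hD : 0 < ‖d‖ ^ 2 + 1 := by positivity
  -- A step this short makes the linear term dominate the quadratic one.
  obtain ⟨t, ht0, ht1, ht⟩ : ∃ t : ℝ, 0 < t ∧ t ≤ 1 ∧ t * (‖d‖ ^ 2 + 1) ≤ -a := by
    refine ⟨min 1 (-a / (‖d‖ ^ 2 + 1)), ?_, min_le_left _ _, ?_⟩
    · exact lt_min one_pos (div_pos (by linarith) hD)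
    · exact (le_div_iff₀ hD).1 (min_le_right _ _)
  have h := hmin _ (hd t ht0 ht1)
  have h2 : ‖y - δ‖ ^ 2 ≤ ‖y + t • d - δ‖ ^ 2 := by gcongr
  have h3 : y + t • d - δ = (y - δ) + t • d := by abel
  rw [h3, norm_add_sq_real, inner_smul_right, norm_smul, mul_pow, ← ha_def, Real.norm_eq_abs,
    sq_abs] at h2
  have h4 : t * (2 * a + t * ‖d‖ ^ 2) < 0 := mul_neg_of_pos_of_neg ht0 (by linarith)
  linarith

theorem stmt2 (m : ℕ) (hm : 2 ≤ m) (δ y : EuclideanSpace ℝ (Fin m))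
    (K : Set (EuclideanSpace ℝ (Fin m)))
    (hK : K = {p : EuclideanSpace ℝ (Fin m) |
      ∀ i : Fin m, i ≠ ⟨0, by omega⟩ → p ⟨0, by omega⟩ ≤ p i})
    (hyK : y ∈ K) (hymin : ∀ p ∈ K, ‖y - δ‖ ≤ ‖p - δ‖) :
    y ⟨0, by omega⟩ ≤ δ ⟨0, by omega⟩ ∧
    (∀ i : Fin m, i ≠ ⟨0, by omega⟩ → y i = max (y ⟨0, by omega⟩) (δ i)) ∧
    ∑ i, y i = ∑ i, δ i := by
  subst hK
  have key := inner_nonneg_of_norm_min hymin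
  generalize hz : (⟨0, by omega⟩ : Fin m) = z at *
  simp only [Set.mem_setOf_eq] at hyK key
  refine ⟨?_, ?_, ?_⟩
  · have h := key (EuclideanSpace.single z (-1)) fun t ht0 _ i hi => by
      have := hyK i hi
      simp [hi]
      linarith
    simp [EuclideanSpace.inner_single_right] at h
    linarith
  · intro i hi
    have hlow : δ i ≤ y i := by
      have h := key (EuclideanSpace.single i 1) fun t ht0 _ j hj => by
        have := hyK j hj
        by_cases hji : j = i
        · subst hji
          simp [hi.symm]
          linarith
        · simpa [hi.symm, hji] using this
      simp [EuclideanSpace.inner_single_right] at h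
      linarith
    rcases (hyK i hi).eq_or_lt with heq | hlt
    · rw [max_eq_left (by linarith), heq]
    · have h := key (EuclideanSpace.single i (-(y i - y z))) fun t ht0 ht1 j hj => by
        have := hyK j hj
        by_cases hji : j = i
        · subst hji
          simp [hi.symm]
          nlinarith
        · simpa [hi.symm, hji] using this
      rw [EuclideanSpace.inner_single_right] at h
      simp only [PiLp.sub_apply, conj_trivial] at h
      have hup : y i ≤ δ i := by
        by_contra! hc
        nlinarith [mul_pos (sub_pos.2 hlt) (sub_pos.2 hc)]
      rw [max_eq_right (by linarith)]
      linarith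
  · have h (c : ℝ) := key (WithLp.toLp 2 fun _ => c) fun t _ _ j hj => by
      simpa using hyK j hj
    have h1 := h 1
    have h2 := h (-1)
    simp [PiLp.inner_apply] at h1 h2
    linarith
end

section
/- Let s > 0 and let (q_1, q_2) ∈ ℝ² be a unit vector. If (u, v) ∈ ℝ² satisfies the surface oriented minimum slope constraint, i.e., q_1 u + q_2 v < 0 and u² + v² + 1 − ((1+s²)/s²)·(q_1 u + q_2 v)² ≤ 0, then u² + v² ≥ s², i.e., (u, v) satisfies the surface minimum slope constraint with minimum slope s. -/
theorem stmt8 (s q₁ q₂ u v : ℝ) (hs : 0 < s) (hq : q₁ ^ 2 + q₂ ^ 2 = 1)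
    (h1 : q₁ * u + q₂ * v < 0)
    (h2 : u ^ 2 + v ^ 2 + 1 - ((1 + s ^ 2) / s ^ 2) * (q₁ * u + q₂ * v) ^ 2 ≤ 0) :
    u ^ 2 + v ^ 2 ≥ s ^ 2 := by
  -- Cauchy–Schwarz for the unit vector `(q₁, q₂)`, via Lagrange's identity
  have hcs : (q₁ * u + q₂ * v) ^ 2 ≤ u ^ 2 + v ^ 2 := by
    have hid : u ^ 2 + v ^ 2 = (q₁ * u + q₂ * v) ^ 2 + (q₁ * v - q₂ * u) ^ 2 := by
      linear_combination (-(u ^ 2 + v ^ 2)) * hq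
    linarith [sq_nonneg (q₁ * v - q₂ * u)]
  have hle : u ^ 2 + v ^ 2 + 1 ≤ (1 + s ^ 2) / s ^ 2 * (u ^ 2 + v ^ 2) := by
    have := mul_le_mul_of_nonneg_left hcs (show 0 ≤ (1 + s ^ 2) / s ^ 2 by positivity)
    linarith
  -- after clearing `s ^ 2`, the terms `s ^ 2 * (u ^ 2 + v ^ 2)` cancel
  rw [div_mul_eq_mul_div, le_div_iff₀ (by positivity)] at hle
  linarith
end

section
/- Let s > 0 and let (q_1, q_2) ∈ ℝ² be a unit vector. Then the set {(u, v) ∈ ℝ² : q_1 u + q_2 v < 0 and u² + v² + 1 − ((1+s²)/s²)·(q_1 u + q_2 v)² ≤ 0} is a convex subset of ℝ². -/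
/-!
In the orthonormal coordinates `t = q₁ u + q₂ v`, `w = q₁ v - q₂ u`, the second inequality reads
`w ^ 2 + 1 ≤ (t / s) ^ 2`, so the set is the region bounded by one branch of a hyperbola. Its
convexity is the reverse Cauchy-Schwarz inequality for the Lorentzian form `T ^ 2 - w ^ 2`: two
points with `1 + w ^ 2 ≤ T ^ 2` and `T > 0` satisfy `1 + w * w' ≤ T * T'`, which controls the cross
term of a convex combination.
-/

/-- The second inequality in rotated coordinates, where `T = -t / s` is positive on the set. -/
lemma slope_iff (s q₁ q₂ u v : ℝ) (hs : 0 < s) (hq : q₁ ^ 2 + q₂ ^ 2 = 1) :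
    u ^ 2 + v ^ 2 + 1 - ((1 + s ^ 2) / s ^ 2) * (q₁ * u + q₂ * v) ^ 2 ≤ 0 ↔
      1 + (q₁ * v - q₂ * u) ^ 2 ≤ (-(q₁ * u + q₂ * v) / s) ^ 2 := by
  have hne : s ≠ 0 := hs.ne'
  have h : u ^ 2 + v ^ 2 + 1 - ((1 + s ^ 2) / s ^ 2) * (q₁ * u + q₂ * v) ^ 2 =
      1 + (q₁ * v - q₂ * u) ^ 2 - (-(q₁ * u + q₂ * v) / s) ^ 2 := by
    field_simp
    linear_combination (-(u ^ 2 + v ^ 2) * s ^ 2) * hq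
  rw [h, sub_nonpos]

/-- Reverse Cauchy-Schwarz for `T ^ 2 - w ^ 2` on the forward hyperboloid region. -/
lemma one_add_mul_le {w w' T T' : ℝ} (hT : 0 < T) (hT' : 0 < T')
    (h : 1 + w ^ 2 ≤ T ^ 2) (h' : 1 + w' ^ 2 ≤ T' ^ 2) : 1 + w * w' ≤ T * T' := by
  refine le_of_sq_le_sq ?_ (by positivity)
  calc (1 + w * w') ^ 2 ≤ (1 + w ^ 2) * (1 + w' ^ 2) := by nlinarith [sq_nonneg (w - w')]
    _ ≤ T ^ 2 * T' ^ 2 := by gcongr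
    _ = (T * T') ^ 2 := by ring

theorem stmt9 (s q₁ q₂ : ℝ) (hs : 0 < s) (hq : q₁ ^ 2 + q₂ ^ 2 = 1) :
    Convex ℝ {p : ℝ × ℝ | q₁ * p.1 + q₂ * p.2 < 0 ∧
      p.1 ^ 2 + p.2 ^ 2 + 1 - ((1 + s ^ 2) / s ^ 2) * (q₁ * p.1 + q₂ * p.2) ^ 2 ≤ 0} := by
  rintro ⟨u, v⟩ ⟨hn, h⟩ ⟨u', v'⟩ ⟨hn', h'⟩ a b ha hb hab
  rw [slope_iff s q₁ q₂ _ _ hs hq] at h h'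
  refine ⟨?_, (slope_iff s q₁ q₂ _ _ hs hq).2 ?_⟩
  · have hlin : IsLinearMap ℝ fun p : ℝ × ℝ => q₁ * p.1 + q₂ * p.2 :=
      ⟨fun x y => by simp only [Prod.fst_add, Prod.snd_add]; ring,
        fun c x => by simp only [Prod.smul_fst, Prod.smul_snd, smul_eq_mul]; ring⟩
    exact convex_halfSpace_lt hlin 0 hn hn' ha hb hab
  · simp only [Prod.smul_mk, Prod.mk_add_mk, smul_eq_mul] at hn hn' h h' ⊢
    have hT : 0 < -(q₁ * u + q₂ * v) / s := div_pos (by linarith) hs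
    have hT' : 0 < -(q₁ * u' + q₂ * v') / s := div_pos (by linarith) hs
    have hc := one_add_mul_le hT hT' h h'
    have e : -(q₁ * (a * u + b * u') + q₂ * (a * v + b * v')) / s =
        a * (-(q₁ * u + q₂ * v) / s) + b * (-(q₁ * u' + q₂ * v') / s) := by ring
    have e' : q₁ * (a * v + b * v') - q₂ * (a * u + b * u') =
        a * (q₁ * v - q₂ * u) + b * (q₁ * v' - q₂ * u') := by ring
    rw [e, e']
    generalize -(q₁ * u + q₂ * v) / s = T at *
    generalize -(q₁ * u' + q₂ * v') / s = T' at *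
    generalize q₁ * v - q₂ * u = w at *
    generalize q₁ * v' - q₂ * u' = w' at *
    have h1 : 1 = (a + b) ^ 2 := by rw [hab]; norm_num
    have i1 := mul_le_mul_of_nonneg_left h (sq_nonneg a)
    have i2 := mul_le_mul_of_nonneg_left h' (sq_nonneg b)
    have i3 := mul_le_mul_of_nonneg_left hc (mul_nonneg ha hb)
    -- Expanding with `1 = (a + b) ^ 2`, the claim is `i1 + i2 + 2 * i3`.
    linarith
end

section
/- Let s > 0. The set {(u, v) ∈ ℝ² : u < 0 and v² − u²/s² + 1 ≤ 0} (the region bounded by the left branch of the hyperbola u²/s² − v² = 1) is a closed-in-its-interior-half-plane convex subset of ℝ²; in particular, for s = 1, the set {(u, v) ∈ ℝ² : u < 0, v² − u² + 1 ≤ 0} is convex. -/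
/-!
After rescaling and reflecting the first coordinate, the region is the solid hyperboloid
`v² + 1 ≤ x²`, `0 < x`. Two of its points satisfy the reversed Cauchy–Schwarz inequality
`x y - v w ≥ 1` (`one_add_mul_le`), so the Lorentzian square of a convex combination with
weights `a`, `b` is at least `a² + b² + 2ab = 1` (`convex_hyperbola`).
-/

/-- Reversed Cauchy–Schwarz inequality for the points `(x, v)`, `(y, w)` of the region
`v² + 1 ≤ x²`, `0 < x`: the Lorentzian product `x y - v w` is at least `1`. -/
lemma one_add_mul_le_s10 {x y v w : ℝ} (hx : 0 < x) (hy : 0 < y)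
    (h1 : v ^ 2 + 1 ≤ x ^ 2) (h2 : w ^ 2 + 1 ≤ y ^ 2) : v * w + 1 ≤ x * y := by
  apply le_of_sq_le_sq _ (mul_pos hx hy).le
  have h : (v ^ 2 + 1) * (w ^ 2 + 1) ≤ x ^ 2 * y ^ 2 := by gcongr
  nlinarith [sq_nonneg (v - w)]

/-- Expanding the square of a convex combination, the two diagonal terms are controlled by
membership of the endpoints and the cross term by `one_add_mul_le`; the constants sum to
`a² + b² + 2ab = 1`. -/
lemma convex_hyperbola (s : ℝ) (hs : 0 < s) :
    Convex ℝ {p : ℝ × ℝ | p.1 < 0 ∧ p.2 ^ 2 - p.1 ^ 2 / s ^ 2 + 1 ≤ 0} := by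
  rintro ⟨u, v⟩ ⟨hu, huv⟩ ⟨t, w⟩ ⟨ht, htw⟩ a b ha hb hab
  simp only [Set.mem_ofPred_eq, Prod.smul_mk, Prod.mk_add_mk, smul_eq_mul] at *
  refine ⟨by simpa using (convex_Iio (0 : ℝ)) hu ht ha hb hab, ?_⟩
  rw [← div_pow] at *
  -- The points have negative first coordinate, so the lemma applies to `-(u / s)`, `-(t / s)`.
  have key := one_add_mul_le_s10 (x := -(u / s)) (y := -(t / s)) (v := v) (w := w)
    (neg_pos.2 (div_neg_of_neg_of_pos hu hs)) (neg_pos.2 (div_neg_of_neg_of_pos ht hs))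
    (by linarith [neg_sq (u / s)]) (by linarith [neg_sq (t / s)])
  have e : (a * u + b * t) / s = a * (u / s) + b * (t / s) := by ring
  rw [e]
  have h1 := mul_le_mul_of_nonneg_left huv (sq_nonneg a)
  have h2 := mul_le_mul_of_nonneg_left htw (sq_nonneg b)
  have h3 := mul_le_mul_of_nonneg_left key (mul_nonneg ha hb)
  have h4 : (a + b) ^ 2 = 1 := by rw [hab, one_pow]
  linarith

theorem stmt10 (s : ℝ) (hs : 0 < s) :
    Convex ℝ {p : ℝ × ℝ | p.1 < 0 ∧ p.2 ^ 2 - p.1 ^ 2 / s ^ 2 + 1 ≤ 0} ∧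
    Convex ℝ {p : ℝ × ℝ | p.1 < 0 ∧ p.2 ^ 2 - p.1 ^ 2 + 1 ≤ 0} :=
  ⟨convex_hyperbola s hs, by simpa using convex_hyperbola 1 one_pos⟩
end
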